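/- Let R be a simple finitely generated unital associative F-algebra with an involution * and an idempotent e such that ee* = e*e = 0 and e + e* = 1, and suppose R is not finite-dimensional as a module over its center Z. Let K₋₂ = K ∩ eRe* and K₂ = K ∩ e*Re. Then the Jordan pair (K₋₂, K₂) with triple products {a,b,c} = abc + cba is finitely generated: there exist finite subsets S ⊆ K₋₂ and T ⊆ K₂ such that for every pair of F-subspaces V ⊆ K₋₂ and W ⊆ K₂ with S ⊆ V, T ⊆ W, a b c + c b a ∈ V for all a,c ∈ V, b ∈ W, and b a b′ + b′ a b ∈ W for all b,b′ ∈ W, a ∈ V, one has V = K₋₂ and W = K₂. -/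

import Mathlib

section SimpleRing

variable {A : Type*} [Ring A]

/-- In a simple ring, a predicate that defines a two-sided ideal and holds at a nonzero element
holds everywhere. -/
theorem IsSimpleRing.induction_of_ne_zero [IsSimpleRing A] {P : A → Prop} (hzero : P 0)
    (hadd : ∀ x y, P x → P y → P (x + y)) (hleft : ∀ x y, P y → P (x * y))
    (hright : ∀ x y, P x → P (x * y)) {a : A} (ha : a ≠ 0) (hPa : P a) (b : A) : P b := by
  let I : TwoSidedIdeal A := TwoSidedIdeal.mk' {x | P x} hzero (fun {x y} => hadd x y)
    (fun {x} hx => by simpa using hleft (-1) x hx) (fun {x y} => hleft x y)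
    (fun {x y} => hright x y)
  have h1 : (1 : A) ∈ I := IsSimpleRing.one_mem_of_ne_zero_mem I ha
    ((TwoSidedIdeal.mem_mk' ..).2 hPa)
  have h2 : P 1 := (TwoSidedIdeal.mem_mk' ..).1 h1
  simpa using hleft b 1 h2

theorem IsSimpleRing.exists_sum_mul_mul_eq_one [IsSimpleRing A] {a : A} (ha : a ≠ 0) :
    ∃ (n : ℕ) (x y : Fin n → A), ∑ i, x i * a * y i = 1 := by
  refine IsSimpleRing.induction_of_ne_zero
    (P := fun b => ∃ (n : ℕ) (x y : Fin n → A), ∑ i, x i * a * y i = b)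
    ⟨0, 0, 0, by simp⟩ ?_ ?_ ?_ ha ⟨1, 1, 1, by simp⟩ 1
  · rintro _ _ ⟨n, x, y, rfl⟩ ⟨m, x', y', rfl⟩
    exact ⟨n + m, Fin.append x x', Fin.append y y', by simp [Fin.sum_univ_add]⟩
  · rintro c _ ⟨n, x, y, rfl⟩
    exact ⟨n, fun i => c * x i, y, by simp [Finset.mul_sum, mul_assoc]⟩
  · rintro _ c ⟨n, x, y, rfl⟩
    exact ⟨n, x, fun i => y i * c, by simp [Finset.sum_mul, mul_assoc]⟩

/-- A simple ring is prime. -/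
theorem IsSimpleRing.eq_zero_of_forall_mul_mul_eq_zero [IsSimpleRing A] {p q : A} (hp : p ≠ 0)
    (h : ∀ x, p * x * q = 0) : q = 0 := by
  have := IsSimpleRing.induction_of_ne_zero (P := fun b => ∀ x, b * x * q = 0) (by simp)
    (fun x y hx hy z => by simp [add_mul, hx, hy])
    (fun x y hy z => by simp [mul_assoc x, hy]) (fun x y hx z => by rw [mul_assoc x, hx]) hp h 1 1
  simpa using this

variable (A) in
/-- The additive span `[A, A]` of the commutators of a ring. -/
def commutatorSpan : AddSubgroup A := AddSubgroup.closure {z | ∃ x y, z = x * y - y * x}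

theorem mul_sub_mul_mem_commutatorSpan (x y : A) : x * y - y * x ∈ commutatorSpan A :=
  AddSubgroup.subset_closure ⟨x, y, rfl⟩

/-- Herstein: an additive Lie ideal of a simple ring containing two noncommuting elements contains
all commutators. -/
theorem commutatorSpan_le_of_lie_ideal [IsSimpleRing A] (S : AddSubgroup A)
    (hS : ∀ s ∈ S, ∀ a, s * a - a * s ∈ S) {p q : A} (hp : p ∈ S) (hq : q ∈ S)
    (hpq : p * q ≠ q * p) : commutatorSpan A ≤ S := by
  -- the ring of all `t` with `[t, A] ⊆ S`
  let T : A → Prop := fun t => ∀ z, t * z - z * t ∈ S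
  have hST : ∀ s ∈ S, T s := hS
  have hTadd : ∀ x y, T x → T y → T (x + y) := fun x y hx hy z => by
    convert S.add_mem (hx z) (hy z) using 1; noncomm_ring
  have hTsub : ∀ x y, T x → T y → T (x - y) := fun x y hx hy z => by
    convert S.sub_mem (hx z) (hy z) using 1; noncomm_ring
  have hTmul : ∀ x y, T x → T y → T (x * y) := fun x y hx hy z => by
    convert S.add_mem (hx (y * z)) (hy (z * x)) using 1; noncomm_ring
  have hTlie : ∀ x a, T x → T (x * a - a * x) := fun x a hx => hST _ (hx a)
  have hright : ∀ x, T ((p * q - q * p) * x) := fun x => by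
    convert hTsub _ _ (hTlie p (q * x) (hST p hp)) (hTmul q _ (hST q hq) (hTlie p x (hST p hp)))
      using 1
    noncomm_ring
  have hall := IsSimpleRing.induction_of_ne_zero (P := fun b => ∀ x y, T (x * b * y))
    (fun x y z => by simp) (fun b c hb hc x y => by
      rw [mul_add, add_mul]; exact hTadd _ _ (hb x y) (hc x y))
    (fun b c hc x y => by rw [← mul_assoc]; exact hc _ _)
    (fun b c hb x y => by rw [← mul_assoc, mul_assoc _ c]; exact hb _ _)
    (sub_ne_zero.2 hpq) (fun x y => by
      convert hTsub _ _ (hright (y * x)) (hTlie _ x (hright y)) using 1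
      noncomm_ring)
  refine (AddSubgroup.closure_le S).2 ?_
  rintro _ ⟨x, y, rfl⟩
  simpa using hall x 1 1 y

end SimpleRing

/-- If `f x` is, modulo `N`, a multiple of `g x` for every `x`, then either a fixed multiplier works
or `g` has rank at most one modulo `N`. -/
theorem LinearMap.exists_smul_or_mem_sup_span {Z X Y : Type*} [Field Z] [AddCommGroup X]
    [Module Z X] [AddCommGroup Y] [Module Z Y] (f g : X →ₗ[Z] Y) (N : Submodule Z Y)
    (h : ∀ x, ∃ c : Z, f x - c • g x ∈ N) :
    (∃ c : Z, ∀ x, f x - c • g x ∈ N) ∨ ∃ y, ∀ x, ∃ c : Z, g x - c • y ∈ N := by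
  by_cases hg : ∀ x, g x ∈ N
  · exact Or.inr ⟨0, fun x => ⟨0, by simpa using hg x⟩⟩
  push Not at hg
  obtain ⟨x₀, hx₀⟩ := hg
  by_cases hg' : ∀ x, ∃ c : Z, g x - c • g x₀ ∈ N
  · exact Or.inr ⟨g x₀, hg'⟩
  push Not at hg'
  obtain ⟨x₁, hx₁⟩ := hg'
  obtain ⟨c, hc⟩ := h x₀
  left
  have key : ∀ x, (∀ d : Z, g x - d • g x₀ ∉ N) → f x - c • g x ∈ N := by
    intro x hx
    obtain ⟨l, hl⟩ := h x
    obtain ⟨m, hm⟩ := h (x + x₀)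
    have h1 : (l - m) • g x - (m - c) • g x₀ ∈ N := by
      convert N.sub_mem (N.sub_mem hm hl) hc using 1
      simp only [map_add]; module
    have hlm : l = m := by
      by_contra hne
      have hne : l - m ≠ 0 := sub_ne_zero.2 hne
      refine hx ((l - m)⁻¹ * (m - c)) ?_
      convert N.smul_mem (l - m)⁻¹ h1 using 1
      rw [smul_sub, smul_smul, smul_smul, inv_mul_cancel₀ hne, one_smul]
    have hmc : m = c := by
      by_contra hne
      have hne : m - c ≠ 0 := sub_ne_zero.2 hne
      refine hx₀ ?_
      rw [hlm, sub_self, zero_smul, zero_sub, neg_mem_iff] at h1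
      simpa [smul_smul, inv_mul_cancel₀ hne] using N.smul_mem (m - c)⁻¹ h1
    rwa [← hmc, ← hlm]
  refine ⟨c, fun x => ?_⟩
  by_cases hx : ∀ d : Z, g x - d • g x₀ ∉ N
  · exact key x hx
  push Not at hx
  obtain ⟨d, hd⟩ := hx
  have h2 := key (x + x₁) fun d' hd' => hx₁ (d' - d) <| by
    convert N.sub_mem hd' hd using 1
    simp only [map_add]; module
  convert N.sub_mem h2 (key x₁ hx₁) using 1
  simp only [map_add]; module

section Central

variable {Z A : Type*} [Field Z] [Ring A] [Algebra Z A]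

theorem exists_algebraMap_eq_of_forall_commute [Algebra.IsCentral Z A] {a : A}
    (h : ∀ x, x * a = a * x) : ∃ c : Z, algebraMap Z A c = a := by
  have : a ∈ Subalgebra.center Z A := Subalgebra.mem_center_iff.2 h
  exact Algebra.mem_bot.1 (Algebra.IsCentral.out this)

section Finite

variable [IsSimpleRing A]

/-- If `p A q` lies in a finite-dimensional space for some nonzero `p, q`, then `A` is
finite-dimensional. -/
theorem Module.Finite.of_forall_mul_mul_mem {p q : A} (hp : p ≠ 0) (hq : q ≠ 0)
    (h : ∃ N : Submodule Z A, N.FG ∧ ∀ x, p * x * q ∈ N) : Module.Finite Z A := by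
  have h1 := IsSimpleRing.induction_of_ne_zero
    (P := fun b => ∃ N : Submodule Z A, N.FG ∧ ∀ x, b * x * q ∈ N)
    ⟨⊥, Submodule.fg_bot, by simp⟩
    (fun x y ⟨N, hN, hx⟩ ⟨N', hN', hy⟩ => ⟨N ⊔ N', hN.sup hN', fun z => by
      rw [add_mul, add_mul]; exact Submodule.add_mem_sup (hx z) (hy z)⟩)
    (fun x y ⟨N, hN, hy⟩ => ⟨N.map (LinearMap.mulLeft Z x), hN.map _, fun z =>
      ⟨_, hy z, by simp [mul_assoc]⟩⟩)
    (fun x y ⟨N, hN, hx⟩ => ⟨N, hN, fun z => by rw [mul_assoc x]; exact hx _⟩) hp h 1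
  have h2 := IsSimpleRing.induction_of_ne_zero
    (P := fun b => ∃ N : Submodule Z A, N.FG ∧ ∀ x, x * b ∈ N)
    ⟨⊥, Submodule.fg_bot, by simp⟩
    (fun x y ⟨N, hN, hx⟩ ⟨N', hN', hy⟩ => ⟨N ⊔ N', hN.sup hN', fun z => by
      rw [mul_add]; exact Submodule.add_mem_sup (hx z) (hy z)⟩)
    (fun x y ⟨N, hN, hy⟩ => ⟨N, hN, fun z => by rw [← mul_assoc]; exact hy _⟩)
    (fun x y ⟨N, hN, hx⟩ => ⟨N.map (LinearMap.mulRight Z y), hN.map _, fun z =>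
      ⟨_, hx z, by simp [mul_assoc]⟩⟩) hq (by simpa using h1) 1
  obtain ⟨N, hN, h⟩ := h2
  have : N = ⊤ := eq_top_iff.2 fun x _ => by simpa using h x
  exact ⟨this ▸ hN⟩

/-- In an infinite-dimensional simple algebra, inner derivations of finite rank vanish. -/
theorem mul_comm_of_finite_rank_ad (hinf : ¬ Module.Finite Z A) {y : A}
    (h : ∃ N : Submodule Z A, N.FG ∧ ∀ x, y * x - x * y ∈ N) (z : A) : y * z = z * y := by
  by_contra hz
  obtain ⟨N, hN, h⟩ := h
  refine hinf (Module.Finite.of_forall_mul_mul_mem (p := 1) one_ne_zero (sub_ne_zero.2 hz)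
    ⟨N ⊔ N.map (LinearMap.mulRight Z z), hN.sup (hN.map _), fun x => ?_⟩)
  have : 1 * x * (y * z - z * y) = (y * (x * z) - x * z * y) + -((y * x - x * y) * z) := by
    noncomm_ring
  rw [this]
  exact Submodule.add_mem_sup (h _) (neg_mem ⟨_, h x, rfl⟩)

end Finite

theorem fg_sup_span_singleton {N : Submodule Z A} (hN : N.FG) (y : A) :
    (N ⊔ Submodule.span Z {y}).FG := hN.sup (Submodule.fg_span_singleton y)

/-- An infinite-dimensional central simple algebra is noncommutative. -/
theorem exists_mul_ne_mul_of_not_finite [Algebra.IsCentral Z A] (hinf : ¬ Module.Finite Z A) :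
    ∃ x y : A, x * y ≠ y * x := by
  by_contra! h
  refine hinf ⟨⟨{1}, eq_top_iff.2 fun a _ => ?_⟩⟩
  obtain ⟨c, rfl⟩ := exists_algebraMap_eq_of_forall_commute (Z := Z) (fun x => h x a)
  rw [Finset.coe_singleton, Submodule.mem_span_singleton]
  exact ⟨c, (Algebra.algebraMap_eq_smul_one c).symm⟩

variable [IsSimpleRing A] [Algebra.IsCentral Z A]

/-- In a noncommutative central simple algebra some commutator is not central. -/
theorem exists_mem_commutatorSpan_mul_ne_mul (hinf : ¬ Module.Finite Z A) :
    ∃ a ∈ commutatorSpan A, ∃ y, y * a ≠ a * y := by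
  obtain ⟨x, y, hxy⟩ := exists_mul_ne_mul_of_not_finite hinf
  by_contra! h
  have h1 := h _ (mul_sub_mul_mem_commutatorSpan x y)
  have h2 := h _ (mul_sub_mul_mem_commutatorSpan x (x * y)) y
  refine sub_ne_zero.2 hxy
    (IsSimpleRing.eq_zero_of_forall_mul_mul_eq_zero (sub_ne_zero.2 hxy) fun z => ?_)
  have h3 : x * (x * y) - x * y * x = x * (x * y - y * x) := by noncomm_ring
  have h4 : (x * y - y * x) * (x * y - y * x) = 0 := by
    rw [sub_mul, mul_assoc x, h1 y, ← mul_assoc x, ← h3, ← h2, h3, mul_assoc, sub_self]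
  rw [← h1 z, mul_assoc, h4, mul_zero]

/-- A central simple algebra in which every element of `[A, A]` is quadratic is
finite-dimensional. -/
theorem Module.Finite.of_quadratic_commutators
    (h : ∀ a ∈ commutatorSpan A, a * a ∈ Submodule.span Z {1, a}) : Module.Finite Z A := by
  by_contra hinf
  obtain ⟨a, ha, y, hay⟩ := exists_mem_commutatorSpan_mul_ne_mul hinf
  have hN : (Submodule.span Z {1, a}).FG := Submodule.fg_span (Set.toFinite _)
  set N := Submodule.span Z {1, a}
  have h1N : 1 ∈ N := Submodule.subset_span (by simp)
  have haN : a ∈ N := Submodule.subset_span (by simp)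
  let g : A →ₗ[Z] A := LinearMap.mulLeft Z y - LinearMap.mulRight Z y
  let f : A →ₗ[Z] A := LinearMap.mulLeft Z a ∘ₗ g + LinearMap.mulRight Z a ∘ₗ g
  have hg : ∀ x, g x = y * x - x * y := fun x => rfl
  have hf : ∀ x, f x = a * g x + g x * a := fun x => rfl
  have hfg : ∀ x, ∃ c : Z, f x - c • g x ∈ N := by
    intro x
    have hb : g x ∈ commutatorSpan A := mul_sub_mul_mem_commutatorSpan y x
    obtain ⟨c₁, d₁, h₁⟩ := Submodule.mem_span_pair.1 (h _ (add_mem ha hb))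
    obtain ⟨c₂, d₂, h₂⟩ := Submodule.mem_span_pair.1 (h _ hb)
    refine ⟨d₁ - d₂, ?_⟩
    have : f x - (d₁ - d₂) • g x = (c₁ - c₂) • 1 + d₁ • a - a * a := by
      have e1 : f x = (a + g x) * (a + g x) - a * a - g x * g x := by rw [hf]; noncomm_ring
      rw [e1, ← h₁, ← h₂]; module
    rw [this]
    exact sub_mem (add_mem (N.smul_mem _ h1N) (N.smul_mem _ haN)) (h a ha)
  rcases LinearMap.exists_smul_or_mem_sup_span f g N hfg with ⟨c, hc⟩ | ⟨z, hz⟩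
  · have hw : ∀ x, g x * g a ∈ N ⊔ N.map (LinearMap.mulRight Z y) := by
      intro x
      have : g x * g a = (f (x * y) - c • g (x * y)) + -((f x - c • g x) * y) := by
        simp only [hf, hg, sub_mul, smul_sub, mul_sub, add_mul, smul_mul_assoc, mul_assoc]
        abel
      rw [this]
      exact Submodule.add_mem_sup (hc _) (neg_mem ⟨_, hc x, rfl⟩)
    have hfin : (N ⊔ N.map (LinearMap.mulRight Z y)).FG := hN.sup (hN.map _)
    set N' := N ⊔ N.map (LinearMap.mulRight Z y)
    have hga : g a ≠ 0 := sub_ne_zero.2 hay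
    refine hinf (Module.Finite.of_forall_mul_mul_mem hga hga
      ⟨N' ⊔ N'.map (LinearMap.mulLeft Z a), hfin.sup (hfin.map _), fun x => ?_⟩)
    have : g a * x * g a = g (a * x) * g a + -(a * (g x * g a)) := by
      rw [← sub_eq_add_neg, ← mul_assoc, ← sub_mul]
      simp only [hg]; noncomm_ring
    rw [this]
    exact Submodule.add_mem_sup (hw _) (neg_mem ⟨_, hw x, rfl⟩)
  · refine hay (mul_comm_of_finite_rank_ad hinf ⟨N ⊔ Submodule.span Z {z},
      fg_sup_span_singleton hN z, fun x => ?_⟩ a)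
    obtain ⟨c, hc⟩ := hz x
    rw [← hg, ← sub_add_cancel (g x) (c • z)]
    exact Submodule.add_mem_sup hc (Submodule.smul_mem _ _ (Submodule.mem_span_singleton_self z))

end Central

section MultiplicationAlgebra

variable (Z A : Type*) [Field Z] [Ring A] [Algebra Z A]

/-- The algebra of endomorphisms `x ↦ ∑ pᵢ x qᵢ` of `A`. -/
def multiplicationAlgebra : Subalgebra Z (Module.End Z A) :=
  Algebra.adjoin Z (Set.range (LinearMap.mulLeft Z) ∪ Set.range (LinearMap.mulRight Z))

variable {Z A}

theorem mulLeft_mem_multiplicationAlgebra (a : A) :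
    LinearMap.mulLeft Z a ∈ multiplicationAlgebra Z A :=
  Algebra.subset_adjoin (Or.inl ⟨a, rfl⟩)

theorem mulRight_mem_multiplicationAlgebra (a : A) :
    LinearMap.mulRight Z a ∈ multiplicationAlgebra Z A :=
  Algebra.subset_adjoin (Or.inr ⟨a, rfl⟩)

theorem exists_multiplicationAlgebra_apply_eq_one [IsSimpleRing A] {a : A} (ha : a ≠ 0) :
    ∃ φ ∈ multiplicationAlgebra Z A, φ a = 1 :=
  IsSimpleRing.induction_of_ne_zero (P := fun b => ∃ φ ∈ multiplicationAlgebra Z A, φ a = b)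
    ⟨0, zero_mem _, rfl⟩
    (fun _ _ ⟨φ, hφ, h⟩ ⟨ψ, hψ, h'⟩ => ⟨φ + ψ, add_mem hφ hψ, by simp [h, h']⟩)
    (fun x _ ⟨φ, hφ, h⟩ => ⟨_, mul_mem (mulLeft_mem_multiplicationAlgebra x) hφ, by simp [h]⟩)
    (fun _ y ⟨φ, hφ, h⟩ => ⟨_, mul_mem (mulRight_mem_multiplicationAlgebra y) hφ, by simp [h]⟩)
    ha ⟨1, one_mem _, rfl⟩ 1

/-- Density: a vector killed by every multiplication map that kills `s` lies in the span of `s` over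
the center. -/
theorem mem_span_of_forall_multiplicationAlgebra [IsSimpleRing A] [Algebra.IsCentral Z A]
    (s : Finset A) : ∀ y : A, (∀ φ ∈ multiplicationAlgebra Z A, (∀ x ∈ s, φ x = 0) → φ y = 0) →
      y ∈ Submodule.span Z (s : Set A) := by
  classical
  induction s using Finset.induction_on with
  | empty =>
    intro y hy
    have : y = 0 := hy 1 (one_mem _) (by simp)
    simp [this]
  | insert a s _ ih =>
    intro y hy
    rw [Finset.coe_insert]
    by_cases has : a ∈ Submodule.span Z (s : Set A)
    · refine Submodule.span_mono (Set.subset_insert _ _) (ih y fun φ hφ h => hy φ hφ ?_)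
      have hker : Submodule.span Z (s : Set A) ≤ LinearMap.ker φ := Submodule.span_le.2 h
      intro x hx
      rcases Finset.mem_insert.1 hx with rfl | hx
      exacts [hker has, h x hx]
    · have : ∃ φ ∈ multiplicationAlgebra Z A, (∀ x ∈ s, φ x = 0) ∧ φ a ≠ 0 := by
        by_contra! h
        exact has (ih a h)
      obtain ⟨φ, hφ, hφs, hφa⟩ := this
      obtain ⟨ψ, hψ, hψa⟩ := exists_multiplicationAlgebra_apply_eq_one (Z := Z) hφa
      have hθ : ψ * φ ∈ multiplicationAlgebra Z A := mul_mem hψ hφ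
      have hθs : ∀ x ∈ s, (ψ * φ) x = 0 := fun x hx => by simp [hφs x hx]
      have hθa : (ψ * φ) a = 1 := hψa
      set θ := ψ * φ
      obtain ⟨c, hc⟩ : ∃ c : Z, algebraMap Z A c = θ y := by
        refine exists_algebraMap_eq_of_forall_commute fun x => sub_eq_zero.1 ?_
        refine hy ((LinearMap.mulLeft Z x - LinearMap.mulRight Z x) * θ)
          (mul_mem (sub_mem (mulLeft_mem_multiplicationAlgebra x)
            (mulRight_mem_multiplicationAlgebra x)) hθ) fun z hz => ?_
        rcases Finset.mem_insert.1 hz with rfl | hz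
        · simp [hθa]
        · simp [hθs z hz]
      have hmem : y - c • a ∈ Submodule.span Z (s : Set A) := by
        refine ih _ fun χ hχ hχs => ?_
        have h := hy (χ - LinearMap.mulLeft Z (χ a) * θ)
          (sub_mem hχ (mul_mem (mulLeft_mem_multiplicationAlgebra _) hθ)) fun z hz => by
            rcases Finset.mem_insert.1 hz with rfl | hz
            · simp [hθa]
            · simp [hθs z hz, hχs z hz]
        simp only [LinearMap.sub_apply, Module.End.mul_apply, LinearMap.mulLeft_apply, ← hc] at h
        rw [map_sub, map_smul, Algebra.smul_def, Algebra.commutes, h]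
      rw [Submodule.mem_span_insert]
      exact ⟨c, _, hmem, by abel⟩

theorem exists_multiplicationAlgebra_of_notMem_span [IsSimpleRing A] [Algebra.IsCentral Z A]
    {s : Finset A} {y : A} (hy : y ∉ Submodule.span Z (s : Set A)) :
    ∃ φ ∈ multiplicationAlgebra Z A, (∀ x ∈ s, φ x = 0) ∧ φ y = 1 := by
  have : ∃ φ ∈ multiplicationAlgebra Z A, (∀ x ∈ s, φ x = 0) ∧ φ y ≠ 0 := by
    by_contra! h
    exact hy (mem_span_of_forall_multiplicationAlgebra s y h)
  obtain ⟨φ, hφ, hφs, hφy⟩ := this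
  obtain ⟨ψ, hψ, hψy⟩ := exists_multiplicationAlgebra_apply_eq_one (Z := Z) hφy
  exact ⟨ψ * φ, mul_mem hψ hφ, fun x hx => by simp [hφs x hx], hψy⟩

/-- Multiplication maps have transposes with respect to multiplication modulo `[A, A]`. -/
theorem exists_mul_sub_apply_mul_mem_commutatorSpan {φ : Module.End Z A}
    (hφ : φ ∈ multiplicationAlgebra Z A) :
    ∀ d : A, ∃ b : A, ∀ z, z * b - φ z * d ∈ commutatorSpan A := by
  induction hφ using Algebra.adjoin_induction with
  | mem φ h =>
    intro d
    rcases h with ⟨p, rfl⟩ | ⟨q, rfl⟩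
    · refine ⟨d * p, fun z => ?_⟩
      convert mul_sub_mul_mem_commutatorSpan (z * d) p using 1
      simp [mul_assoc]
    · exact ⟨q * d, fun z => by simp [mul_assoc, zero_mem]⟩
  | algebraMap c => exact fun d => ⟨c • d, fun z => by simp [zero_mem]⟩
  | add φ ψ _ _ h h' =>
    intro d
    obtain ⟨b, hb⟩ := h d
    obtain ⟨b', hb'⟩ := h' d
    refine ⟨b + b', fun z => ?_⟩
    convert add_mem (hb z) (hb' z) using 1
    rw [LinearMap.add_apply]
    noncomm_ring
  | mul φ ψ _ _ h h' =>
    intro d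
    obtain ⟨b, hb⟩ := h d
    obtain ⟨b', hb'⟩ := h' b
    refine ⟨b', fun z => ?_⟩
    convert add_mem (hb' z) (hb (ψ z)) using 1
    rw [Module.End.mul_apply]
    abel

/-- In an infinite-dimensional central simple algebra `A`, an additive subgroup containing `[A, A]`
and satisfying the Jordan-type closure condition `closed` is all of `A`. -/
theorem AddSubgroup.eq_top_of_jordan_closed [IsSimpleRing A] [Algebra.IsCentral Z A]
    (hinf : ¬ Module.Finite Z A) (S : AddSubgroup A) (hS : commutatorSpan A ≤ S)
    (closed : ∀ a c b : A, a ∈ S → c ∈ S → b ∈ S → a * c ∈ S → c * a ∈ S → a * b ∈ S →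
      c * b ∈ S → (a * c + c * a) * b ∈ S) : S = ⊤ := by
  classical
  by_contra hne
  have hspan : ∀ a ∈ S, ∀ c ∈ S, a * c ∈ S → a * c + c * a ∈ Submodule.span Z {1, a, c} := by
    intro a ha c hc hac
    by_contra hmem
    refine hne (eq_top_iff.2 fun d _ => ?_)
    obtain ⟨φ, hφ, hs, hy⟩ := exists_multiplicationAlgebra_of_notMem_span (Z := Z)
      (s := {1, a, c}) (y := a * c + c * a) (by simpa using hmem)
    obtain ⟨b, hb⟩ := exists_mul_sub_apply_mul_mem_commutatorSpan hφ d
    have hzero : ∀ z, φ z = 0 → z * b ∈ S := fun z hz => hS (by simpa [hz] using hb z)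
    have hca : c * a ∈ S := by
      simpa using sub_mem hac (hS (mul_sub_mul_mem_commutatorSpan a c))
    have h1 := closed a c b ha hc (by simpa using hzero 1 (hs 1 (by simp))) hac hca
      (hzero a (hs a (by simp))) (hzero c (hs c (by simp)))
    simpa [hy] using sub_mem h1 (hS (hb (a * c + c * a)))
  refine hinf (Module.Finite.of_quadratic_commutators fun a ha => ?_)
  let f : A →ₗ[Z] A := LinearMap.mulLeft Z (a * a) - LinearMap.mulRight Z (a * a)
  let g : A →ₗ[Z] A := LinearMap.mulLeft Z a - LinearMap.mulRight Z a
  have hf : ∀ x, f x = a * a * x - x * (a * a) := fun x => rfl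
  have hg : ∀ x, g x = a * x - x * a := fun x => rfl
  have hN : (Submodule.span Z {1, a}).FG := Submodule.fg_span (Set.toFinite _)
  have h1N : 1 ∈ Submodule.span Z {1, a} := Submodule.subset_span (by simp)
  have haN : a ∈ Submodule.span Z {1, a} := Submodule.subset_span (by simp)
  have hfg : ∀ x, ∃ c : Z, f x - c • g x ∈ Submodule.span Z {1, a} := by
    intro x
    have hag : a * g x ∈ S := hS <| by
      convert mul_sub_mul_mem_commutatorSpan a (a * x) using 1
      rw [hg]; noncomm_ring
    obtain ⟨c₁, c₂, c₃, h⟩ := Submodule.mem_span_triple.1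
      (hspan a (hS ha) (g x) (hS (mul_sub_mul_mem_commutatorSpan a x)) hag)
    refine ⟨c₃, Submodule.mem_span_pair.2 ⟨c₁, c₂, ?_⟩⟩
    have hfx : f x = a * g x + g x * a := by rw [hf, hg]; noncomm_ring
    rw [hfx, ← h, add_sub_cancel_right]
  have hcentral : ∀ b : A, (∀ z, b * z = z * b) → b ∈ Submodule.span Z {1, a} := by
    intro b hb
    obtain ⟨c, rfl⟩ := exists_algebraMap_eq_of_forall_commute (Z := Z) fun z => (hb z).symm
    rw [Algebra.algebraMap_eq_smul_one]
    exact Submodule.smul_mem _ _ h1N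
  rcases LinearMap.exists_smul_or_mem_sup_span f g _ hfg with ⟨c, hc⟩ | ⟨z, hz⟩
  · have := hcentral (a * a - c • a) (mul_comm_of_finite_rank_ad hinf ⟨_, hN, fun x => by
      convert hc x using 1
      rw [hf, hg]
      simp only [sub_mul, mul_sub, smul_mul_assoc, mul_smul_comm, smul_sub]
      abel⟩)
    simpa using add_mem this (Submodule.smul_mem _ c haN)
  · have := mul_comm_of_finite_rank_ad hinf (y := a) ⟨_, fg_sup_span_singleton hN z, fun x => by
      obtain ⟨c, hc⟩ := hz x
      rw [← hg, ← sub_add_cancel (g x) (c • z)]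
      exact Submodule.add_mem_sup hc
        (Submodule.smul_mem _ _ (Submodule.mem_span_singleton_self z))⟩
    exact hcentral _ fun z => by rw [mul_assoc, this, mul_assoc, this, mul_assoc]

end MultiplicationAlgebra

section Double

open scoped TensorProduct

variable (F : Type*) {A : Type*} [Field F] [Ring A] [Algebra F A]

/-- The linear map `a ↦ a ⊗ 1 + 1 ⊗ a`. -/
def doubleMap : A →ₗ[F] A ⊗[F] A :=
  (Algebra.TensorProduct.includeLeft : A →ₐ[F] A ⊗[F] A).toLinearMap +
    (Algebra.TensorProduct.includeRight : A →ₐ[F] A ⊗[F] A).toLinearMap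

theorem doubleMap_apply (a : A) : doubleMap F a = a ⊗ₜ[F] 1 + 1 ⊗ₜ[F] a := rfl

theorem doubleMap_lie (a b : A) : doubleMap F (a * b - b * a) =
    doubleMap F a * doubleMap F b - doubleMap F b * doubleMap F a := by
  simp only [doubleMap_apply, mul_add, add_mul, Algebra.TensorProduct.tmul_mul_tmul, one_mul,
    mul_one, TensorProduct.sub_tmul, TensorProduct.tmul_sub]
  abel

theorem tmul_add_tmul_eq_doubleMap (p q : A) :
    p ⊗ₜ[F] q + q ⊗ₜ[F] p = doubleMap F p * doubleMap F q - doubleMap F (p * q) := by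
  simp only [doubleMap_apply, mul_add, add_mul, Algebra.TensorProduct.tmul_mul_tmul, one_mul,
    mul_one]
  abel

variable {F}

theorem tmul_add_tmul_mem {O : Subalgebra F (A ⊗[F] A)} {p q : A} (hp : doubleMap F p ∈ O)
    (hq : doubleMap F q ∈ O) (hpq : doubleMap F (p * q) ∈ O) : p ⊗ₜ[F] q + q ⊗ₜ[F] p ∈ O := by
  rw [tmul_add_tmul_eq_doubleMap]
  exact sub_mem (mul_mem hp hq) hpq

/-- The closure condition for elements whose doubles lie in a subalgebra of `A ⊗ A`. -/
theorem doubleMap_jordan_mem (O : Subalgebra F (A ⊗[F] A))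
    (hO : ∀ a ∈ commutatorSpan A, doubleMap F a ∈ O) {a c b : A} (ha : doubleMap F a ∈ O)
    (hc : doubleMap F c ∈ O) (hb : doubleMap F b ∈ O) (hac : doubleMap F (a * c) ∈ O)
    (hca : doubleMap F (c * a) ∈ O) (hab : doubleMap F (a * b) ∈ O)
    (hcb : doubleMap F (c * b) ∈ O) : doubleMap F ((a * c + c * a) * b) ∈ O := by
  have hcomm : ∀ x y : A, doubleMap F (x * y) ∈ O → doubleMap F (y * x) ∈ O := fun x y h => by
    have := sub_mem h (hO _ (mul_sub_mul_mem_commutatorSpan x y))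
    rwa [← map_sub, sub_sub_cancel] at this
  have h1 := mul_mem (tmul_add_tmul_mem ha hc hac) hb
  have h2 := mul_mem ha (tmul_add_tmul_mem hc hb hcb)
  have h3 := mul_mem hc (tmul_add_tmul_mem ha hb hab)
  have h4 : (a * c + c * a) ⊗ₜ[F] b + b ⊗ₜ[F] (a * c + c * a) ∈ O := by
    convert sub_mem (add_mem h2 h3) h1 using 1
    simp only [doubleMap_apply, mul_add, add_mul, Algebra.TensorProduct.tmul_mul_tmul, one_mul,
      mul_one, TensorProduct.add_tmul, TensorProduct.tmul_add]
    abel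
  have h5 : doubleMap F (a * c + c * a) ∈ O := by
    rw [map_add]; exact add_mem hac hca
  rw [tmul_add_tmul_eq_doubleMap] at h4
  simpa using sub_mem (mul_mem h5 hb) h4

/-- Doubles of a Lie-stable set with two noncommuting elements generate all doubles. -/
theorem doubleMap_mem_adjoin {Z : Type*} [Field Z] [Algebra Z A] [IsSimpleRing A]
    [Algebra.IsCentral Z A] (hinf : ¬ Module.Finite Z A) (P : Set A)
    (hP : ∀ p ∈ P, ∀ a, p * a - a * p ∈ Submodule.span F P)
    (hcomm : ∃ p ∈ P, ∃ q ∈ P, p * q ≠ q * p) (a : A) :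
    doubleMap F a ∈ Algebra.adjoin F (doubleMap F '' P) := by
  set O := Algebra.adjoin F (doubleMap F '' P)
  have hPO : ∀ p ∈ P, doubleMap F p ∈ O := fun p hp => Algebra.subset_adjoin ⟨p, hp, rfl⟩
  have hspan : ∀ p ∈ Submodule.span F P, doubleMap F p ∈ O := by
    have : Submodule.span F P ≤ (Subalgebra.toSubmodule O).comap (doubleMap F) :=
      Submodule.span_le.2 hPO
    exact this
  have hlie : ∀ b : A, ∀ t ∈ O, t * doubleMap F b - doubleMap F b * t ∈ O := by
    intro b t ht
    induction ht using Algebra.adjoin_induction with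
    | mem t h =>
      obtain ⟨p, hp, rfl⟩ := h
      rw [← doubleMap_lie]
      exact hspan _ (hP p hp b)
    | algebraMap c => rw [Algebra.commutes, sub_self]; exact zero_mem O
    | add t u _ _ h h' =>
      convert add_mem h h' using 1
      noncomm_ring
    | mul t u ht hu h h' =>
      convert add_mem (mul_mem h hu) (mul_mem ht h') using 1
      noncomm_ring
  let S : AddSubgroup A := ((Subalgebra.toSubmodule O).comap (doubleMap F)).toAddSubgroup
  have hS : ∀ x, x ∈ S ↔ doubleMap F x ∈ O := fun x => Iff.rfl
  obtain ⟨p, hp, q, hq, hpq⟩ := hcomm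
  have hcS : commutatorSpan A ≤ S := commutatorSpan_le_of_lie_ideal S
    (fun s hs b => by rw [hS, doubleMap_lie]; exact hlie b _ hs) (hPO p hp) (hPO q hq) hpq
  have htop := AddSubgroup.eq_top_of_jordan_closed (Z := Z) hinf S hcS
    fun a c b ha hc hb hac hca hab hcb => doubleMap_jordan_mem O hcS ha hc hb hac hca hab hcb
  exact (hS a).1 (htop ▸ AddSubgroup.mem_top a)

variable (F) in
/-- The trace `t ↦ t + σ t`, where `σ` is the flip of `A ⊗ A`. -/
def flipTrace : A ⊗[F] A →ₗ[F] A ⊗[F] A :=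
  LinearMap.id + (Algebra.TensorProduct.comm F A A).toLinearMap

theorem flipTrace_apply (t : A ⊗[F] A) :
    flipTrace F t = t + Algebra.TensorProduct.comm F A A t := rfl

/-- Galois coordinates for the flip of `A ⊗ A`, for a noncommutative simple algebra `A`. -/
theorem exists_galois_coordinates [IsSimpleRing A] {p q : A} (hpq : p * q ≠ q * p) :
    ∃ (n : ℕ) (X Y : Fin n → A ⊗[F] A), ∑ i, X i * Y i = 1 ∧
      ∑ i, X i * Algebra.TensorProduct.comm F A A (Y i) = 0 := by
  have := IsSimpleRing.induction_of_ne_zero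
    (P := fun b => ∃ (n : ℕ) (X Y : Fin n → A ⊗[F] A), ∑ i, X i * Y i = b ⊗ₜ 1 ∧
      ∑ i, X i * Algebra.TensorProduct.comm F A A (Y i) = 0)
    ⟨0, 0, 0, by simp⟩ ?_ ?_ ?_ (sub_ne_zero.2 hpq)
    ⟨4, ![p ⊗ₜ 1, -(1 ⊗ₜ 1), -((q * p) ⊗ₜ 1), q ⊗ₜ 1], ![q ⊗ₜ 1, q ⊗ₜ p, 1 ⊗ₜ 1, 1 ⊗ₜ p], ?_, ?_⟩ 1
  · simpa only [Algebra.TensorProduct.one_def] using this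
  · rintro b c ⟨n, X, Y, h, h'⟩ ⟨m, X', Y', k, k'⟩
    exact ⟨n + m, Fin.append X X', Fin.append Y Y', by
      simp [Fin.sum_univ_add, h, k, TensorProduct.add_tmul], by simp [Fin.sum_univ_add, h', k']⟩
  · rintro b c ⟨n, X, Y, h, h'⟩
    refine ⟨n, fun i => b ⊗ₜ 1 * X i, Y, ?_, ?_⟩
    · simp [mul_assoc, ← Finset.mul_sum, h]
    · simp only [mul_assoc, ← Finset.mul_sum, h', mul_zero]
  · rintro b c ⟨n, X, Y, h, h'⟩
    refine ⟨n, X, fun i => Y i * c ⊗ₜ 1, ?_, ?_⟩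
    · simp [← mul_assoc, ← Finset.sum_mul, h]
    · simp only [map_mul, ← mul_assoc, ← Finset.sum_mul, h', zero_mul]
  · simp only [Fin.sum_univ_four, Matrix.cons_val, neg_mul, Algebra.TensorProduct.tmul_mul_tmul,
      one_mul, mul_one, TensorProduct.sub_tmul]
    abel
  · simp only [Fin.sum_univ_four, Matrix.cons_val, neg_mul, Algebra.TensorProduct.tmul_mul_tmul,
      one_mul, mul_one, Algebra.TensorProduct.comm_tmul]
    abel

theorem flipTrace_mul {n : ℕ} {X Y : Fin n → A ⊗[F] A} (h : ∑ i, X i * Y i = 1)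
    (h' : ∑ i, X i * Algebra.TensorProduct.comm F A A (Y i) = 0) (t u : A ⊗[F] A) :
    flipTrace F (t * u) = ∑ i, flipTrace F (t * X i) * flipTrace F (Y i * u) := by
  set σ := Algebra.TensorProduct.comm F A A
  have hσσ : ∀ x, σ (σ x) = x := fun x => by
    induction x using TensorProduct.induction_on with
    | zero => simp
    | tmul x y => rfl
    | add x y hx hy => simp [hx, hy]
  have k : ∑ i, σ (X i) * σ (Y i) = 1 := by simpa using congrArg σ h
  have k' : ∑ i, σ (X i) * Y i = 0 := by simpa [hσσ] using congrArg σ h'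
  have expand : ∀ i, flipTrace F (t * X i) * flipTrace F (Y i * u) =
      t * (X i * Y i) * u + t * (X i * σ (Y i)) * σ u +
        (σ t * (σ (X i) * Y i) * u + σ t * (σ (X i) * σ (Y i)) * σ u) := fun i => by
    simp only [flipTrace_apply, map_mul, mul_add, add_mul, mul_assoc]
    abel
  simp only [expand, Finset.sum_add_distrib, ← Finset.sum_mul, ← Finset.mul_sum, h, h', k, k']
  simp [flipTrace_apply, σ]

/-- The traces from `A ⊗ A` are controlled by finitely many of them. -/
theorem exists_finite_flipTrace [IsSimpleRing A] {s : Set A} (hs : s.Finite)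
    (hgen : Algebra.adjoin F s = ⊤) {p q : A} (hpq : p * q ≠ q * p) :
    ∃ E : Set (A ⊗[F] A), E.Finite ∧ ∀ O : Subalgebra F (A ⊗[F] A),
      (∀ t ∈ E, flipTrace F t ∈ O) → ∀ t, flipTrace F t ∈ O := by
  obtain ⟨n, X, Y, h, h'⟩ := exists_galois_coordinates (F := F) hpq
  let X' : Option (Fin n) → A ⊗[F] A := fun i => i.elim 1 X
  let Y' : Option (Fin n) → A ⊗[F] A := fun i => i.elim 1 Y
  let G : Set (A ⊗[F] A) := insert 1 ((fun a => a ⊗ₜ 1) '' s ∪ (fun a => 1 ⊗ₜ a) '' s)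
  have hG : G.Finite := ((hs.image _).union (hs.image _)).insert _
  refine ⟨⋃ i, ⋃ j, (fun g => Y' i * g * X' j) '' G,
    Set.finite_iUnion fun i => Set.finite_iUnion fun j => hG.image _, fun O hO t => ?_⟩
  have hGO : ∀ g ∈ G, ∀ i j, flipTrace F (Y' i * g * X' j) ∈ O := fun g hg i j =>
    hO _ (Set.mem_iUnion.2 ⟨i, Set.mem_iUnion.2 ⟨j, g, hg, rfl⟩⟩)
  let C : Subalgebra F (A ⊗[F] A) :=
    { carrier := {t | ∀ i j, flipTrace F (Y' i * t * X' j) ∈ O}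
      mul_mem' := fun {t u} ht hu i j => by
        rw [show Y' i * (t * u) * X' j = (Y' i * t) * (u * X' j) by simp only [mul_assoc],
          flipTrace_mul h h']
        refine sum_mem fun k _ => mul_mem (ht i (some k)) ?_
        rw [← mul_assoc]
        exact hu (some k) j
      add_mem' := fun {t u} ht hu i j => by
        rw [mul_add, add_mul, map_add]
        exact add_mem (ht i j) (hu i j)
      algebraMap_mem' := fun c i j => by
        rw [Algebra.algebraMap_eq_smul_one, mul_smul_comm, smul_mul_assoc, map_smul]
        exact O.smul_mem (hGO 1 (Set.mem_insert _ _) i j) c }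
  have hGC : G ⊆ C := fun g hg i j => hGO g hg i j
  have hleft : ∀ a : A, a ⊗ₜ[F] 1 ∈ C := by
    have : Algebra.adjoin F s ≤ C.comap Algebra.TensorProduct.includeLeft :=
      Algebra.adjoin_le fun a ha => hGC (Or.inr (Or.inl ⟨a, ha, rfl⟩))
    exact fun a => this (hgen ▸ Algebra.mem_top)
  have hright : ∀ a : A, 1 ⊗ₜ[F] a ∈ C := by
    have : Algebra.adjoin F s ≤ C.comap Algebra.TensorProduct.includeRight :=
      Algebra.adjoin_le fun a ha => hGC (Or.inr (Or.inr ⟨a, ha, rfl⟩))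
    exact fun a => this (hgen ▸ Algebra.mem_top)
  have hC : t ∈ C := by
    induction t using TensorProduct.induction_on with
    | zero => exact zero_mem C
    | tmul x y => simpa using mul_mem (hleft x) (hright y)
    | add x y hx hy => exact add_mem hx hy
  simpa [X', Y'] using hC none none

theorem Algebra.exists_finite_subset_mem_adjoin {B : Type*} [Ring B] [Algebra F B] {s : Set B}
    {x : B} (hx : x ∈ Algebra.adjoin F s) :
    ∃ t ⊆ s, t.Finite ∧ x ∈ Algebra.adjoin F t := by
  induction hx using Algebra.adjoin_induction with
  | mem x hx =>
    exact ⟨{x}, Set.singleton_subset_iff.2 hx, Set.finite_singleton x,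
      Algebra.subset_adjoin rfl⟩
  | algebraMap c => exact ⟨∅, Set.empty_subset s, Set.finite_empty, Subalgebra.algebraMap_mem _ c⟩
  | add x y _ _ hx hy =>
    obtain ⟨t, ht, htf, hxt⟩ := hx
    obtain ⟨u, hu, huf, hyu⟩ := hy
    exact ⟨t ∪ u, Set.union_subset ht hu, htf.union huf, add_mem
      (Algebra.adjoin_mono Set.subset_union_left hxt)
      (Algebra.adjoin_mono Set.subset_union_right hyu)⟩
  | mul x y _ _ hx hy =>
    obtain ⟨t, ht, htf, hxt⟩ := hx
    obtain ⟨u, hu, huf, hyu⟩ := hy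
    exact ⟨t ∪ u, Set.union_subset ht hu, htf.union huf, mul_mem
      (Algebra.adjoin_mono Set.subset_union_left hxt)
      (Algebra.adjoin_mono Set.subset_union_right hyu)⟩

/-- Finitely many doubles of elements of `P` generate all doubles. -/
theorem exists_finite_doubleMap {Z : Type*} [Field Z] [Algebra Z A] [IsSimpleRing A]
    [Algebra.IsCentral Z A] (hinf : ¬ Module.Finite Z A) {s : Set A} (hs : s.Finite)
    (hgen : Algebra.adjoin F s = ⊤) (P : Set A)
    (hP : ∀ p ∈ P, ∀ a, p * a - a * p ∈ Submodule.span F P)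
    (hcomm : ∃ p ∈ P, ∃ q ∈ P, p * q ≠ q * p) :
    ∃ Q ⊆ P, Q.Finite ∧ ∀ O : Subalgebra F (A ⊗[F] A), (∀ p ∈ Q, doubleMap F p ∈ O) →
      ∀ a, doubleMap F a ∈ O := by
  have htrace : ∀ t, flipTrace F t ∈ Algebra.adjoin F (doubleMap F '' P) := fun t => by
    have hd := doubleMap_mem_adjoin (F := F) hinf P hP hcomm
    induction t using TensorProduct.induction_on with
    | zero => simp [zero_mem]
    | tmul x y => exact tmul_add_tmul_mem (hd x) (hd y) (hd _)
    | add x y hx hy => rw [map_add]; exact add_mem hx hy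
  obtain ⟨p, -, q, -, hpq⟩ := hcomm
  obtain ⟨E, hE, hEO⟩ := exists_finite_flipTrace (F := F) hs hgen hpq
  have hsub : ∀ t, ∃ Q ⊆ P, Q.Finite ∧ flipTrace F t ∈ Algebra.adjoin F (doubleMap F '' Q) := by
    intro t
    exact Set.exists_subset_image_finite_and.1
      (Algebra.exists_finite_subset_mem_adjoin (htrace t))
  choose Q hQP hQ htQ using hsub
  refine ⟨⋃ t ∈ E, Q t, Set.iUnion₂_subset fun t _ => hQP t, hE.biUnion fun t _ => hQ t,
    fun O hO a => ?_⟩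
  have := hEO O (fun t ht => (Algebra.adjoin_le (by
    rintro _ ⟨b, hb, rfl⟩
    exact hO b (Set.mem_biUnion ht hb)) : _ ≤ O) (htQ t)) (a ⊗ₜ 1)
  simpa [flipTrace_apply, doubleMap_apply] using this

end Double

namespace IsIdempotentElem

section Corner

variable {R : Type*} [Ring R] {e : R} (he : IsIdempotentElem e)

/-- The underlying element of an element of the corner ring `e R e`. -/
@[coe] def cornerCoe {he : IsIdempotentElem e} (a : he.Corner) : R :=
  Subtype.val (p := (· ∈ Subsemigroup.corner e)) a

instance : CoeOut he.Corner R := ⟨cornerCoe⟩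

variable {he} in
theorem corner_ext {a b : he.Corner} (h : (a : R) = b) : a = b := Subtype.ext h

/-- The element `e r e` of the corner ring `e R e`. -/
def toCorner (r : R) : he.Corner := ⟨e * r * e, r, rfl⟩

theorem coe_toCorner (r : R) : (he.toCorner r : R) = e * r * e := rfl

theorem coe_corner_mul (a b : he.Corner) : ((a * b : he.Corner) : R) = a * b := rfl

theorem coe_corner_add (a b : he.Corner) : ((a + b : he.Corner) : R) = a + b := rfl

theorem coe_corner_sub (a b : he.Corner) : ((a - b : he.Corner) : R) = a - b := rfl

theorem coe_corner_one : ((1 : he.Corner) : R) = e := rfl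

theorem coe_corner_zero : ((0 : he.Corner) : R) = 0 := rfl

theorem mul_coe_corner (a : he.Corner) : e * (a : R) = a :=
  ((Subsemigroup.mem_corner_iff he).1 a.2).1

theorem coe_corner_mul_self (a : he.Corner) : (a : R) * e = a :=
  ((Subsemigroup.mem_corner_iff he).1 a.2).2

theorem toCorner_coe (a : he.Corner) : he.toCorner a = a :=
  corner_ext (by rw [coe_toCorner, mul_coe_corner, coe_corner_mul_self])

variable {k : Type*} [CommRing k] [Algebra k R]

/-- The module structure inherited by the corner ring. -/
abbrev cornerModule : Module k he.Corner where
  smul c a := ⟨c • (a : R), by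
    obtain ⟨r, hr⟩ := a.2
    exact ⟨c • r, by simp only [mul_smul_comm, smul_mul_assoc] at hr ⊢; rw [hr]; rfl⟩⟩
  one_smul a := corner_ext (one_smul k (a : R))
  mul_smul c d a := corner_ext (mul_smul c d (a : R))
  smul_zero c := corner_ext (smul_zero c)
  smul_add c a b := corner_ext (smul_add c (a : R) b)
  add_smul c d a := corner_ext (add_smul c d (a : R))
  zero_smul a := corner_ext (zero_smul k (a : R))

instance cornerAlgebra : Algebra k he.Corner :=
  letI : Module k he.Corner := he.cornerModule
  Algebra.ofModule (fun c a b => corner_ext (smul_mul_assoc c (a : R) b))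
    (fun c a b => corner_ext (mul_smul_comm c (a : R) b))

theorem coe_corner_smul (c : k) (a : he.Corner) : ((c • a : he.Corner) : R) = c • (a : R) := rfl

variable (k) in
/-- The inclusion of the corner ring as a linear map. -/
def cornerVal : he.Corner →ₗ[k] R where
  toFun a := a
  map_add' _ _ := rfl
  map_smul' _ _ := rfl

theorem toCorner_add (a b : R) : he.toCorner (a + b) = he.toCorner a + he.toCorner b :=
  corner_ext (by simp [coe_toCorner, coe_corner_add, mul_add, add_mul])

theorem toCorner_smul (c : k) (a : R) : he.toCorner (c • a) = c • he.toCorner a :=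
  corner_ext (by simp [coe_toCorner, coe_corner_smul])

theorem toCorner_sum {ι : Type*} (s : Finset ι) (f : ι → R) :
    he.toCorner (∑ i ∈ s, f i) = ∑ i ∈ s, he.toCorner (f i) :=
  map_sum (AddMonoidHom.mk' he.toCorner he.toCorner_add) f s

theorem coe_corner_sum {ι : Type*} (s : Finset ι) (f : ι → he.Corner) :
    ((∑ i ∈ s, f i : he.Corner) : R) = ∑ i ∈ s, (f i : R) :=
  map_sum (he.cornerVal ℤ) f s

/-- Corners of simple rings at nonzero idempotents are simple. -/
theorem isSimpleRing_corner [IsSimpleRing R] (h0 : e ≠ 0) : IsSimpleRing he.Corner := by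
  refine isSimpleRing_iff_isTwoSided_imp.2 ⟨⟨⟨0, 1, fun h => h0 (congrArg cornerCoe h).symm⟩⟩,
    fun I hI => or_iff_not_imp_left.2 fun hbot => ?_⟩
  obtain ⟨a, haI, ha⟩ := Submodule.exists_mem_ne_zero_of_ne_bot hbot
  have ha' : (a : R) ≠ 0 := fun h => ha (corner_ext h)
  obtain ⟨n, x, y, hxy⟩ := IsSimpleRing.exists_sum_mul_mul_eq_one ha'
  rw [Ideal.eq_top_iff_one]
  have : (1 : he.Corner) = ∑ i, he.toCorner (x i) * a * he.toCorner (y i) := by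
    refine corner_ext ?_
    rw [coe_corner_sum, coe_corner_one]
    calc e = e * (∑ i, x i * a * y i) * e := by rw [hxy, mul_one, he.eq]
      _ = _ := by
        rw [Finset.mul_sum, Finset.sum_mul]
        refine Finset.sum_congr rfl fun i _ => ?_
        rw [coe_corner_mul, coe_corner_mul, coe_toCorner, coe_toCorner]
        conv_lhs => rw [← he.mul_coe_corner a, ← he.coe_corner_mul_self a]
        simp only [mul_assoc]
  rw [this]
  exact sum_mem fun i _ => I.mul_mem_right _ (I.mul_mem_left _ haI)

/-- Corners of finitely generated simple algebras are finitely generated. -/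
theorem exists_finite_adjoin_corner_eq_top [IsSimpleRing R] (h0 : e ≠ 0) {s : Set R}
    (hs : s.Finite) (hgen : Algebra.adjoin k s = ⊤) :
    ∃ t : Set he.Corner, t.Finite ∧ Algebra.adjoin k t = ⊤ := by
  obtain ⟨n, x, y, hxy⟩ := IsSimpleRing.exists_sum_mul_mul_eq_one h0
  let X : Option (Fin n) → R := fun i => i.elim 1 x
  let Y : Option (Fin n) → R := fun i => i.elim 1 y
  let t : Set he.Corner := ⋃ i, ⋃ j, (fun g => he.toCorner (Y i * g * X j)) '' insert 1 s
  refine ⟨t, Set.finite_iUnion fun i => Set.finite_iUnion fun j => (hs.insert 1).image _, ?_⟩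
  have htB : ∀ g ∈ insert 1 s, ∀ i j, he.toCorner (Y i * g * X j) ∈ Algebra.adjoin k t :=
    fun g hg i j => Algebra.subset_adjoin (Set.mem_iUnion.2 ⟨i, Set.mem_iUnion.2 ⟨j, g, hg, rfl⟩⟩)
  let C : Subalgebra k R :=
    { carrier := {r | ∀ i j, he.toCorner (Y i * r * X j) ∈ Algebra.adjoin k t}
      mul_mem' := fun {r u} hr hu i j => by
        have : he.toCorner (Y i * (r * u) * X j) =
            ∑ l, he.toCorner (Y i * r * x l) * he.toCorner (y l * u * X j) := by
          have h1 : Y i * (r * u) * X j = ∑ l, Y i * r * x l * e * (y l * u * X j) := by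
            calc Y i * (r * u) * X j = Y i * r * (∑ l, x l * e * y l) * (u * X j) := by
                  rw [hxy]; simp only [mul_assoc, one_mul]
              _ = _ := by simp only [Finset.mul_sum, Finset.sum_mul, mul_assoc]
          rw [h1, toCorner_sum]
          refine Finset.sum_congr rfl fun l _ => corner_ext (he := he) ?_
          rw [coe_corner_mul]
          simp only [coe_toCorner]
          conv_lhs => rw [← he.eq]
          simp only [mul_assoc]
          simp only [← mul_assoc e e, he.eq]
        rw [this]
        exact sum_mem fun l _ => mul_mem (hr i (some l)) (hu (some l) j)
      add_mem' := fun {r u} hr hu i j => by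
        rw [mul_add, add_mul]
        exact (he.toCorner_add _ _).symm ▸ add_mem (hr i j) (hu i j)
      algebraMap_mem' := fun c i j => by
        rw [Algebra.algebraMap_eq_smul_one, mul_smul_comm, smul_mul_assoc, toCorner_smul]
        exact Subalgebra.smul_mem _ (htB 1 (Set.mem_insert _ _) i j) c }
  have hC : ∀ r, r ∈ C := by
    have : Algebra.adjoin k s ≤ C :=
      Algebra.adjoin_le fun g hg => htB g (Set.mem_insert_of_mem _ hg)
    exact fun r => this (hgen ▸ Algebra.mem_top)
  refine eq_top_iff.2 fun a _ => ?_
  have := hC a none none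
  simpa [X, Y, toCorner_coe] using this

variable {Z : Type*} [Field Z] [Algebra Z R]

/-- A simple algebra with a finite-dimensional nonzero corner is finite-dimensional. -/
theorem finite_of_finite_corner [IsSimpleRing R] (h0 : e ≠ 0) (h : Module.Finite Z he.Corner) :
    Module.Finite Z R :=
  Module.Finite.of_forall_mul_mul_mem h0 h0 ⟨(⊤ : Submodule Z he.Corner).map (he.cornerVal Z),
    h.1.map _, fun x => ⟨he.toCorner x, trivial, rfl⟩⟩

/-- Corners of central simple algebras at nonzero idempotents are central. -/
theorem isCentral_corner [IsSimpleRing R] [Algebra.IsCentral Z R] (h0 : e ≠ 0) :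
    Algebra.IsCentral Z he.Corner := by
  refine ⟨fun z hz => Algebra.mem_bot.2 ?_⟩
  have hz : ∀ r, e * r * e * z = z * (e * r * e) := fun r =>
    congrArg cornerCoe (Subalgebra.mem_center_iff.1 hz (he.toCorner r))
  have hez := he.mul_coe_corner z
  have hze := he.coe_corner_mul_self z
  have hz' : ∀ r, e * (r * z) = z * (r * e) := fun r => by
    rw [← hez, ← mul_assoc, ← mul_assoc, hz r, hez]
    conv_rhs => rw [← hze]
    simp only [mul_assoc]
  obtain ⟨n, x, y, hxy⟩ := IsSimpleRing.exists_sum_mul_mul_eq_one h0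
  obtain ⟨c, hc⟩ := exists_algebraMap_eq_of_forall_commute (Z := Z) (a := ∑ i, x i * z * y i)
    fun r => by
      calc r * ∑ i, x i * z * y i = (∑ j, x j * e * y j) * (r * ∑ i, x i * z * y i) := by
            rw [hxy, one_mul]
        _ = ∑ j, ∑ i, x j * (e * (y j * r * x i * z)) * y i := by
            simp only [Finset.mul_sum, Finset.sum_mul, mul_assoc]
            exact Finset.sum_comm
        _ = (∑ j, x j * z * y j) * (r * ∑ i, x i * e * y i) := by
            simp only [hz']
            simp only [Finset.mul_sum, Finset.sum_mul, mul_assoc]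
            exact Finset.sum_comm
        _ = _ := by rw [hxy, mul_one]
  refine ⟨c, corner_ext ?_⟩
  rw [Algebra.algebraMap_eq_smul_one, coe_corner_smul, coe_corner_one]
  calc c • e = e * ∑ i, x i * z * y i := by
        rw [← hc, ← Algebra.commutes, ← Algebra.smul_def]
    _ = z * ∑ i, x i * e * y i := by
        simp only [Finset.mul_sum, ← mul_assoc]
        refine Finset.sum_congr rfl fun i _ => ?_
        rw [mul_assoc e, hz', mul_assoc (z : R) (x i)]
    _ = z := by rw [hxy, mul_one]

end Corner

end IsIdempotentElem

/-- In a simple algebra of characteristic not two, an element whose inner derivation squares to zero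
is central. -/
theorem mul_comm_of_ad_sq_eq_zero {F A : Type*} [Field F] [Ring A] [Algebra F A] [IsSimpleRing A]
    (hchar : (2 : F) ≠ 0) {p : A}
    (h : ∀ x, p * (p * x - x * p) = (p * x - x * p) * p) (x : A) : p * x = x * p := by
  have hmul : ∀ x y, (p * x - x * p) * (p * y - y * p) = 0 := by
    intro x y
    have h1 : (2 : F) • ((p * x - x * p) * (p * y - y * p)) =
        (p * (p * (x * y) - x * y * p) - (p * (x * y) - x * y * p) * p)
          - (p * (p * x - x * p) - (p * x - x * p) * p) * y
          - x * (p * (p * y - y * p) - (p * y - y * p) * p) := by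
      rw [two_smul]; noncomm_ring
    rw [h, h, h, sub_self, sub_self, sub_self, zero_mul, mul_zero, sub_zero, sub_zero] at h1
    exact (smul_eq_zero.1 h1).resolve_left hchar
  by_contra hx
  refine sub_ne_zero.2 hx
    (IsSimpleRing.eq_zero_of_forall_mul_mul_eq_zero (sub_ne_zero.2 hx) fun y => ?_)
  have h1 : (p * x - x * p) * y * (p * x - x * p) = (p * x - x * p) * (p * (y * x) - y * x * p)
      - (p * x - x * p) * (p * y - y * p) * x := by noncomm_ring
  rw [h1, hmul, hmul, zero_mul, sub_zero]

section SkewCorner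

open scoped TensorProduct

variable {F R : Type*} [Field F] [Ring R] [Algebra F R]

/-- `st` is an `F`-linear involution of `R` and `e` is a nonzero idempotent. -/
structure InvolutionIdempotent (st : R →ₗ[F] R) (e : R) : Prop where
  star_mul : ∀ a b : R, st (a * b) = st b * st a
  star_star : ∀ a : R, st (st a) = a
  idem : IsIdempotentElem e
  ne_zero : e ≠ 0

/-- The skew-symmetric elements of `e R e*`, where `*` is given by `st`. -/
def skewCorner (st : R →ₗ[F] R) (e : R) : Submodule F R where
  carrier := {k | st k = -k ∧ e * k = k}
  add_mem' := fun ⟨h1, h2⟩ ⟨h3, h4⟩ => ⟨by rw [map_add, h1, h3, neg_add], by rw [mul_add, h2, h4]⟩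
  zero_mem' := ⟨by simp, by simp⟩
  smul_mem' c _ := fun ⟨h1, h2⟩ => ⟨by rw [map_smul, h1, smul_neg], by rw [mul_smul_comm, h2]⟩

variable {st : R →ₗ[F] R} {e : R}

namespace InvolutionIdempotent

theorem star (h : InvolutionIdempotent st e) : InvolutionIdempotent st (st e) where
  star_mul := h.star_mul
  star_star := h.star_star
  idem := by rw [IsIdempotentElem, ← h.star_mul, h.idem.eq]
  ne_zero := fun h0 => h.ne_zero (by rw [← h.star_star e, h0, map_zero])

theorem mul_star_of_mem (h : InvolutionIdempotent st e) {k : R} (hk : k ∈ skewCorner st e) :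
    k * st e = k := by
  have := congrArg st hk.2
  rwa [h.star_mul, hk.1, neg_mul, neg_inj] at this

theorem mul_of_mem_star (h : InvolutionIdempotent st e) {k : R}
    (hk : k ∈ skewCorner st (st e)) : k * e = k := by
  simpa [h.star_star] using h.star.mul_star_of_mem hk

theorem coe_skewCorner (h : InvolutionIdempotent st e) :
    (skewCorner st e : Set R) = {a : R | st a = -a ∧ ∃ r : R, a = e * r * st e} := by
  ext k
  constructor
  · intro hk
    exact ⟨hk.1, k, by rw [hk.2, h.mul_star_of_mem hk]⟩
  · rintro ⟨h1, r, rfl⟩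
    exact ⟨h1, by simp only [← mul_assoc, h.idem.eq]⟩

variable (h : InvolutionIdempotent st e)

theorem star_mul_star_coe (a : h.idem.Corner) : st e * st (a : R) = st a := by
  rw [← h.star_mul, h.idem.coe_corner_mul_self]

/-- `e R e` acts on the skew elements of `e R e*` by `k ↦ a k + k a*`. -/
theorem mul_add_mul_star_mem {k : R} (hk : k ∈ skewCorner st e) (a : h.idem.Corner) :
    a * k + k * st a ∈ skewCorner st e := by
  refine ⟨?_, ?_⟩
  · simp only [map_add, h.star_mul, h.star_star, hk.1]
    noncomm_ring
  · rw [mul_add, ← mul_assoc, ← mul_assoc, h.idem.mul_coe_corner, hk.2]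

/-- `e R e` acts on the skew elements of `e* R e` by `k ↦ k a + a* k`. -/
theorem mul_add_star_mul_mem {k : R} (hk : k ∈ skewCorner st (st e)) (a : h.idem.Corner) :
    k * a + st a * k ∈ skewCorner st (st e) := by
  refine ⟨?_, ?_⟩
  · simp only [map_add, h.star_mul, h.star_star, hk.1]
    noncomm_ring
  · rw [mul_add, ← mul_assoc, ← mul_assoc, h.star_mul_star_coe, hk.2]

/-- The products `k k'` with `k ∈ K ∩ e R e*` and `k' ∈ K ∩ e* R e`. -/
def skewProducts : Set h.idem.Corner :=
  {p | ∃ k ∈ skewCorner st e, ∃ k' ∈ skewCorner st (st e), (p : R) = k * k'}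

theorem coe_toCorner_mul {k k' : R} (hk : k ∈ skewCorner st e)
    (hk' : k' ∈ skewCorner st (st e)) : (h.idem.toCorner (k * k') : R) = k * k' := by
  rw [IsIdempotentElem.coe_toCorner, ← mul_assoc, hk.2, mul_assoc, h.mul_of_mem_star hk']

theorem toCorner_mul_mem_skewProducts {k k' : R} (hk : k ∈ skewCorner st e)
    (hk' : k' ∈ skewCorner st (st e)) : h.idem.toCorner (k * k') ∈ h.skewProducts :=
  ⟨k, hk, k', hk', h.coe_toCorner_mul hk hk'⟩

theorem lie_mem_span_skewProducts {p : h.idem.Corner} (hp : p ∈ h.skewProducts)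
    (a : h.idem.Corner) : p * a - a * p ∈ Submodule.span F h.skewProducts := by
  obtain ⟨k, hk, l, hl, hkl⟩ := hp
  have h1 := h.mul_add_star_mul_mem hl a
  have h2 := h.mul_add_mul_star_mem hk a
  have : p * a - a * p = h.idem.toCorner (k * (l * a + st a * l)) -
      h.idem.toCorner ((a * k + k * st a) * l) := by
    refine IsIdempotentElem.corner_ext ?_
    rw [IsIdempotentElem.coe_corner_sub, IsIdempotentElem.coe_corner_sub, h.coe_toCorner_mul hk h1,
      h.coe_toCorner_mul h2 hl, IsIdempotentElem.coe_corner_mul, IsIdempotentElem.coe_corner_mul,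
      hkl]
    noncomm_ring
  rw [this]
  exact sub_mem (Submodule.subset_span (h.toCorner_mul_mem_skewProducts hk h1))
    (Submodule.subset_span (h.toCorner_mul_mem_skewProducts h2 hl))

/-- If all products `k k'` vanish, then the corner `e R e` is commutative. -/
theorem corner_mul_comm [IsSimpleRing R]
    (h0 : ∀ k ∈ skewCorner st e, ∀ k' ∈ skewCorner st (st e), k * k' = 0)
    (a c : h.idem.Corner) : a * c = c * a := by
  refine sub_eq_zero.1 (IsIdempotentElem.corner_ext ?_)
  rw [IsIdempotentElem.coe_corner_sub, IsIdempotentElem.coe_corner_mul,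
    IsIdempotentElem.coe_corner_mul, IsIdempotentElem.coe_corner_zero]
  by_cases hK : ∃ k ∈ skewCorner st e, k ≠ 0
  · obtain ⟨k, hk, hk0⟩ := hK
    have hsym : ∀ k ∈ skewCorner st e, ∀ n, st e * n = n → n * e = n → k * n = k * st n := by
      intro k hk n hn hn'
      rw [← sub_eq_zero, ← mul_sub]
      refine h0 k hk _ ⟨?_, ?_⟩
      · rw [map_sub, h.star_star, neg_sub]
      · rw [mul_sub, hn, ← h.star_mul, hn']
    have hact : ∀ (b : h.idem.Corner) n, st e * n = n → n * e = n →
        k * st b * n = k * n * b := by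
      intro b n hn hn'
      have h1 := hsym _ (h.mul_add_mul_star_mem hk b) n hn hn'
      have h2 := hsym k hk n hn hn'
      have h3 := hsym k hk (n * b) (by rw [← mul_assoc, hn])
        (by rw [mul_assoc, h.idem.coe_corner_mul_self])
      rw [add_mul, add_mul, mul_assoc (b : R), mul_assoc (b : R), h2, add_right_inj] at h1
      rw [h1, mul_assoc, ← h.star_mul, ← h3, mul_assoc]
    refine IsSimpleRing.eq_zero_of_forall_mul_mul_eq_zero hk0 fun r => ?_
    have hn : st e * (st e * r * e) = st e * r * e := by
      rw [← mul_assoc, ← mul_assoc, h.star.idem.eq]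
    have hn' : st e * r * e * e = st e * r * e := by rw [mul_assoc, h.idem.eq]
    have h1 := hact a _ hn hn'
    have h2 := hact a (st e * r * e * c) (by rw [← mul_assoc, hn])
      (by rw [mul_assoc, h.idem.coe_corner_mul_self])
    rw [← mul_assoc, h1] at h2
    simp only [← mul_assoc, h.mul_star_of_mem hk] at h2
    calc k * r * (a * c - c * a) = k * r * ((e * a) * c - (e * c) * a) := by
          rw [h.idem.mul_coe_corner, h.idem.mul_coe_corner]
      _ = k * r * e * a * c - k * r * e * c * a := by noncomm_ring
      _ = 0 := by rw [h2, sub_self]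
  · push Not at hK
    have hsym : ∀ m, e * m = m → m * st e = m → st m = m := by
      intro m hm hm'
      refine (sub_eq_zero.1 (hK (m - st m) ⟨?_, ?_⟩)).symm
      · rw [map_sub, h.star_star, neg_sub]
      · have := congrArg st hm'
        rw [h.star_mul, h.star_star] at this
        rw [mul_sub, hm, this]
    have hact : ∀ (b : h.idem.Corner) m, e * m = m → m * st e = m → b * m = m * st b := by
      intro b m hm hm'
      have := hsym (b * m) (by rw [← mul_assoc, h.idem.mul_coe_corner]) (by rw [mul_assoc, hm'])
      rw [← this, h.star_mul, hsym m hm hm']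
    by_contra hac
    refine h.star.ne_zero (IsSimpleRing.eq_zero_of_forall_mul_mul_eq_zero hac fun r => ?_)
    have hm : e * (e * r * st e) = e * r * st e := by rw [← mul_assoc, ← mul_assoc, h.idem.eq]
    have hm' : e * r * st e * st e = e * r * st e := by rw [mul_assoc, h.star.idem.eq]
    have h1 : ∀ b d : h.idem.Corner, b * d * (e * r * st e) = e * r * st e * st (d * b : R) := by
      intro b d
      rw [mul_assoc, hact d _ hm hm', ← mul_assoc, hact b _ hm hm', mul_assoc, ← h.star_mul]
    have h2 : ∀ b d : h.idem.Corner, e * r * st e * st (d * b : R) = d * b * (e * r * st e) := by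
      intro b d
      exact (hact (d * b) _ hm hm').symm
    have h3 : (a * c - c * a : R) * r * st e = (a * c - c * a) * (e * r * st e) := by
      have : (a * c - c * a : R) = (a * c - c * a) * e := by
        rw [sub_mul, mul_assoc, mul_assoc, h.idem.coe_corner_mul_self, h.idem.coe_corner_mul_self]
      conv_lhs => rw [this]
      simp only [mul_assoc]
    rw [h3, sub_mul, h1, h2, sub_self]

/-- Two of the products `k k'` do not commute. -/
theorem exists_skewProducts_not_comm {Z : Type*} [Field Z] [Algebra Z R]
    [IsSimpleRing R] [Algebra.IsCentral Z R] (hchar : (2 : F) ≠ 0) (hinf : ¬ Module.Finite Z R) :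
    ∃ p ∈ h.skewProducts, ∃ q ∈ h.skewProducts, p * q ≠ q * p := by
  have := h.idem.isSimpleRing_corner h.ne_zero
  have := h.idem.isCentral_corner (Z := Z) h.ne_zero
  have hinf' : ¬ Module.Finite Z h.idem.Corner :=
    fun hf => hinf (h.idem.finite_of_finite_corner h.ne_zero hf)
  by_contra! hcomm
  have hcentral : ∀ p ∈ h.skewProducts, ∃ c : Z, (p : R) = c • e := by
    intro p hp
    have hspan : ∀ q ∈ Submodule.span F h.skewProducts, p * q = q * p := by
      intro q hq
      induction hq using Submodule.span_induction with
      | mem q hq => exact hcomm p hp q hq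
      | zero => rw [mul_zero, zero_mul]
      | add x y _ _ hx hy => rw [mul_add, add_mul, hx, hy]
      | smul c x _ hx => rw [mul_smul_comm, smul_mul_assoc, hx]
    have := mul_comm_of_ad_sq_eq_zero hchar (p := p)
      fun x => hspan _ (h.lie_mem_span_skewProducts hp x)
    obtain ⟨c, rfl⟩ := exists_algebraMap_eq_of_forall_commute (Z := Z) fun x => (this x).symm
    exact ⟨c, by rw [Algebra.algebraMap_eq_smul_one]; rfl⟩
  have hscalar : ∀ k ∈ skewCorner st e, ∀ k' ∈ skewCorner st (st e), ∃ c : Z, k * k' = c • e := by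
    intro k hk k' hk'
    rw [← h.coe_toCorner_mul hk hk']
    exact hcentral _ (h.toCorner_mul_mem_skewProducts hk hk')
  by_cases h0 : ∀ k ∈ skewCorner st e, ∀ k' ∈ skewCorner st (st e), k * k' = 0
  · obtain ⟨x, y, hxy⟩ := exists_mul_ne_mul_of_not_finite hinf'
    exact hxy (h.corner_mul_comm h0 x y)
  push Not at h0
  obtain ⟨k, hk, k', hk', hkk⟩ := h0
  obtain ⟨c, hc⟩ := hscalar k hk k' hk'
  have hc0 : c ≠ 0 := by
    rintro rfl
    exact hkk (by rw [hc, zero_smul])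
  refine hinf' (Module.Finite.of_quadratic_commutators fun a _ => ?_)
  obtain ⟨α, hα⟩ := hscalar _ (h.mul_add_mul_star_mem hk a) k' hk'
  have hmem : a * k * st a ∈ skewCorner st e := by
    refine ⟨?_, ?_⟩
    · simp only [h.star_mul, h.star_star, hk.1]
      noncomm_ring
    · rw [← mul_assoc, ← mul_assoc, h.idem.mul_coe_corner]
  obtain ⟨β, hβ⟩ := hscalar _ hmem k' hk'
  rw [add_mul, mul_assoc, hc, mul_smul_comm, h.idem.coe_corner_mul_self] at hα
  have h1 : k * st (a : R) * k' = α • e - c • (a : R) := by rw [← hα]; abel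
  have h2 : α • (a : R) - c • ((a : R) * a) = β • e := by
    rw [← hβ, mul_assoc (a : R), mul_assoc (a : R), h1, mul_sub, mul_smul_comm, mul_smul_comm,
      h.idem.coe_corner_mul_self]
  refine Submodule.mem_span_pair.2 ⟨-(c⁻¹ * β), c⁻¹ * α, IsIdempotentElem.corner_ext ?_⟩
  change (-(c⁻¹ * β)) • e + (c⁻¹ * α) • (a : R) = a * a
  have h3 : c • ((a : R) * a) = α • (a : R) - β • e := by rw [← h2]; abel
  rw [← one_smul Z ((a : R) * a), ← inv_mul_cancel₀ hc0, mul_smul c⁻¹ c, h3]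
  module

/-- The action `(p ⊗ q) m = p m q*` of `e R e ⊗ e R e`. -/
def tensorAct : h.idem.Corner ⊗[F] h.idem.Corner →ₗ[F] R →ₗ[F] R :=
  TensorProduct.lift (LinearMap.mk₂ F
    (fun p q => LinearMap.mulLeft F (p : R) ∘ₗ LinearMap.mulRight F (st q))
    (fun p p' q => LinearMap.ext fun m => add_mul (p : R) p' _)
    (fun c p q => LinearMap.ext fun m => smul_mul_assoc c (p : R) _)
    (fun p q q' => LinearMap.ext fun m => by
      simp [IsIdempotentElem.coe_corner_add, mul_add])
    (fun c p q => LinearMap.ext fun m => by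
      simp [IsIdempotentElem.coe_corner_smul]))

theorem tensorAct_tmul (p q : h.idem.Corner) (m : R) :
    h.tensorAct (p ⊗ₜ q) m = p * (m * st q) := rfl

theorem tensorAct_mul (t u : h.idem.Corner ⊗[F] h.idem.Corner) (m : R) :
    h.tensorAct (t * u) m = h.tensorAct t (h.tensorAct u m) := by
  induction t using TensorProduct.induction_on with
  | zero => simp
  | add x y hx hy => simp [add_mul, hx, hy]
  | tmul p q =>
    induction u using TensorProduct.induction_on with
    | zero => simp
    | add x y hx hy => simp [mul_add, hx, hy]
    | tmul p' q' =>
      simp only [Algebra.TensorProduct.tmul_mul_tmul, tensorAct_tmul,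
        IsIdempotentElem.coe_corner_mul, h.star_mul, mul_assoc]

/-- The elements of `e R e ⊗ e R e` whose action preserves `V`. -/
def stabilizer (V : Submodule F R) (hV : V ≤ skewCorner st e) :
    Subalgebra F (h.idem.Corner ⊗[F] h.idem.Corner) where
  carrier := {t | ∀ v ∈ V, h.tensorAct t v ∈ V}
  mul_mem' := fun {t u} ht hu v hv => by rw [h.tensorAct_mul]; exact ht _ (hu v hv)
  add_mem' := fun {t u} ht hu v hv => by
    rw [map_add, LinearMap.add_apply]; exact add_mem (ht v hv) (hu v hv)
  algebraMap_mem' c v hv := by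
    rw [Algebra.algebraMap_eq_smul_one, map_smul, LinearMap.smul_apply,
      Algebra.TensorProduct.one_def, tensorAct_tmul, IsIdempotentElem.coe_corner_one,
      h.mul_star_of_mem (hV hv), (hV hv).2]
    exact V.smul_mem c hv

/-- A subspace of `K ∩ e R e*` stable under all `v ↦ a v + v a*` and containing a nonzero element
is everything. -/
theorem skewCorner_le_of_stable [IsSimpleRing R] (hchar : (2 : F) ≠ 0) {V : Submodule F R}
    (hV : V ≤ skewCorner st e)
    (hstab : ∀ a : h.idem.Corner, doubleMap F a ∈ h.stabilizer V hV) {v : R} (hv : v ∈ V)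
    (hv0 : v ≠ 0) : skewCorner st e ≤ V := by
  intro k hk
  have hpair : ∀ a b : h.idem.Corner, a * v * st b + b * v * st a ∈ V := by
    intro a b
    have := tmul_add_tmul_mem (hstab a) (hstab b) (hstab _) v hv
    simpa only [map_add, LinearMap.add_apply, tensorAct_tmul, mul_assoc] using this
  obtain ⟨n, x, y, hxy⟩ := IsSimpleRing.exists_sum_mul_mul_eq_one hv0
  let b : Fin n → h.idem.Corner := fun i => h.idem.toCorner (k * x i)
  let d : Fin n → h.idem.Corner := fun i => h.idem.toCorner (st (y i))
  have hk1 : k = ∑ i, b i * v * st (d i) := by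
    calc k = k * (∑ i, x i * v * y i) * st e := by rw [hxy, mul_one, h.mul_star_of_mem hk]
      _ = _ := by
        rw [Finset.mul_sum, Finset.sum_mul]
        refine Finset.sum_congr rfl fun i _ => ?_
        simp only [b, d, IsIdempotentElem.coe_toCorner, h.star_mul, h.star_star]
        have h1 : e * (k * x i) * e * v * (st e * (y i * st e)) =
            (e * k) * x i * ((e * v) * st e) * (y i * st e) := by simp only [mul_assoc]
        rw [h1, hk.2, (hV hv).2, h.mul_star_of_mem (hV hv)]
        simp only [mul_assoc]
  have hk2 : k = ∑ i, d i * v * st (b i) := by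
    have := congrArg st hk1
    rw [hk.1, map_sum] at this
    simp only [h.star_mul, h.star_star, (hV hv).1, neg_mul, mul_neg, Finset.sum_neg_distrib,
      neg_inj] at this
    simpa only [mul_assoc] using this
  have hmem : (2 : F) • k ∈ V := by
    rw [two_smul]
    nth_rewrite 1 [hk1]
    rw [hk2, ← Finset.sum_add_distrib]
    exact sum_mem fun i _ => hpair _ _
  simpa [smul_smul, inv_mul_cancel₀ hchar] using V.smul_mem (2 : F)⁻¹ hmem

/-- Finitely many elements of the Jordan pair generate its first component. -/
theorem exists_finite_generators (h : InvolutionIdempotent st e) {Z : Type*} [Field Z] [Algebra Z R]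
    [IsSimpleRing R] [Algebra.IsCentral Z R] (hchar : (2 : F) ≠ 0) (hinf : ¬ Module.Finite Z R)
    {s : Set R} (hs : s.Finite) (hgen : Algebra.adjoin F s = ⊤) :
    ∃ S T : Set R, S.Finite ∧ T.Finite ∧ S ⊆ skewCorner st e ∧ T ⊆ skewCorner st (st e) ∧
      ∀ V W : Submodule F R, V ≤ skewCorner st e → S ⊆ V → T ⊆ W →
        (∀ a ∈ V, ∀ b ∈ W, ∀ c ∈ V, a * b * c + c * b * a ∈ V) → skewCorner st e ≤ V := by
  have := h.idem.isSimpleRing_corner h.ne_zero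
  have := h.idem.isCentral_corner (Z := Z) h.ne_zero
  have hinf' : ¬ Module.Finite Z h.idem.Corner :=
    fun hf => hinf (h.idem.finite_of_finite_corner h.ne_zero hf)
  obtain ⟨t, ht, htgen⟩ := h.idem.exists_finite_adjoin_corner_eq_top h.ne_zero hs hgen
  have hnc := h.exists_skewProducts_not_comm hchar hinf
  obtain ⟨Q, hQP, hQ, hQO⟩ := exists_finite_doubleMap hinf' ht htgen h.skewProducts
    (fun p hp a => h.lie_mem_span_skewProducts hp a) hnc
  obtain ⟨p, ⟨k₀, hk₀, k₁, -, hp⟩, q, -, hpq⟩ := hnc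
  have hk₀0 : k₀ ≠ 0 := by
    rintro rfl
    have : p = 0 := IsIdempotentElem.corner_ext
      (by rw [hp, zero_mul, IsIdempotentElem.coe_corner_zero])
    exact hpq (by rw [this, zero_mul, mul_zero])
  have hex : ∀ p ∈ Q, ∃ k k' : R, k ∈ skewCorner st e ∧ k' ∈ skewCorner st (st e) ∧
      (p : R) = k * k' := fun p hp => by
    obtain ⟨k, hk, k', hk', hkk⟩ := hQP hp
    exact ⟨k, k', hk, hk', hkk⟩
  choose! κ κ' hκ hκ' hκκ using hex
  refine ⟨insert k₀ (κ '' Q), κ' '' Q, (hQ.image _).insert _, hQ.image _,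
    Set.insert_subset hk₀ (Set.image_subset_iff.2 hκ), Set.image_subset_iff.2 hκ',
    fun V W hV hS hT hclosed => ?_⟩
  refine h.skewCorner_le_of_stable hchar hV (hQO _ fun p hp v hv => ?_)
    (hS (Set.mem_insert _ _)) hk₀0
  have hk : κ p ∈ V := hS (Set.mem_insert_of_mem _ ⟨p, hp, rfl⟩)
  have hk' : κ' p ∈ W := hT ⟨p, hp, rfl⟩
  have hstp : st (p : R) = κ' p * κ p := by
    rw [hκκ p hp, h.star_mul, (hκ p hp).1, (hκ' p hp).1, neg_mul_neg]
  have := hclosed _ hk _ hk' v hv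
  rw [doubleMap_apply, map_add, LinearMap.add_apply, tensorAct_tmul, tensorAct_tmul,
    IsIdempotentElem.coe_corner_one, hstp, h.mul_star_of_mem (hV hv), hκκ p hp, ← mul_assoc e,
    (hV hv).2]
  simpa only [mul_assoc] using this

end InvolutionIdempotent

end SkewCorner

/-- **Lemma 11.**  Let `R` be a simple finitely generated unital `F`-algebra with
involution and an idempotent `e` with `e e* = e* e = 0`, `e + e* = 1`, and suppose `R`
is not finite-dimensional over its center.  Then the Jordan pair `(K₋₂, K₂)` with triple
products `{a,b,c} = abc + cba` is finitely generated. -/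
theorem jordan_pair_of_skew_corners_fg
    (F : Type*) [Field F] (hchar : (2 : F) ≠ 0)
    (R : Type*) [Ring R] [Algebra F R] [IsSimpleRing R]
    (hfg : ∃ s : Finset R, Algebra.adjoin F (s : Set R) = ⊤)
    (st : R →ₗ[F] R)
    (hst_mul : ∀ a b : R, st (a * b) = st b * st a)
    (hst_inv : ∀ a : R, st (st a) = a)
    (e : R) (he : e * e = e)
    (hee : e * st e = 0) (hee' : st e * e = 0)
    (hsum : e + st e = 1)
    (hinf : ¬ Module.Finite (Subring.center R) R) :
    ∃ (S T : Finset R),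
      (S : Set R) ⊆ {a : R | st a = -a ∧ ∃ r : R, a = e * r * st e} ∧
      (T : Set R) ⊆ {a : R | st a = -a ∧ ∃ r : R, a = st e * r * e} ∧
      ∀ V W : Submodule F R,
        (V : Set R) ⊆ {a : R | st a = -a ∧ ∃ r : R, a = e * r * st e} →
        (W : Set R) ⊆ {a : R | st a = -a ∧ ∃ r : R, a = st e * r * e} →
        (S : Set R) ⊆ (V : Set R) → (T : Set R) ⊆ (W : Set R) →
        (∀ a ∈ V, ∀ b ∈ W, ∀ c ∈ V, a * b * c + c * b * a ∈ V) →
        (∀ b ∈ W, ∀ a ∈ V, ∀ b' ∈ W, b * a * b' + b' * a * b ∈ W) →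
        (V : Set R) = {a : R | st a = -a ∧ ∃ r : R, a = e * r * st e} ∧
          (W : Set R) = {a : R | st a = -a ∧ ∃ r : R, a = st e * r * e} := by
  let _ : Field (Subring.center R) := (IsSimpleRing.isField_center R).toField
  have _ : Algebra.IsCentral (Subring.center R) R :=
    ⟨fun z hz => Algebra.mem_bot.2 ⟨⟨z, hz⟩, rfl⟩⟩
  have h : InvolutionIdempotent st e :=
    ⟨hst_mul, hst_inv, he, fun h0 => zero_ne_one (α := R) (by rw [← hsum, h0, map_zero, add_zero])⟩
  have hcoe := h.coe_skewCorner
  have hcoe' := h.star.coe_skewCorner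
  rw [hst_inv] at hcoe'
  rw [← hcoe, ← hcoe']
  obtain ⟨s, hs⟩ := hfg
  obtain ⟨S, T, hS, hT, hSk, hTk, hgen⟩ :=
    h.exists_finite_generators hchar hinf s.finite_toSet hs
  obtain ⟨T', S', hT', hS', hTk', hSk', hgen'⟩ :=
    h.star.exists_finite_generators hchar hinf s.finite_toSet hs
  rw [hst_inv] at hSk'
  refine ⟨(hS.union hS').toFinset, (hT.union hT').toFinset, ?_, ?_,
    fun V W hV hW hSV hTW hVc hWc => ?_⟩
  · simpa using ⟨hSk, hSk'⟩
  · simpa using ⟨hTk, hTk'⟩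
  · rw [Set.Finite.coe_toFinset, Set.union_subset_iff] at hSV hTW
    exact ⟨hV.antisymm (hgen V W hV hSV.1 hTW.1 hVc),
      hW.antisymm (hgen' W V hW hTW.2 hSV.2 hWc)⟩
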